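/- Let A be a finite-dimensional k-algebra and C = A* its dual coalgebra. For a left A-module M and a right A-module N (equivalently, a right C-comodule M and left C-comodule N), there is an isomorphism Cotor^n_C(M, N) ≅ HH^n(A, M ⊗ N) for all n ≥ 0, where M ⊗ N is an A-bimodule via a·(m⊗n) = am ⊗ n and (m⊗n)·a = m ⊗ na. -/

import Mathlib

open TensorProduct

noncomputable section

universe u

variable (k : Type u) [Field k]
variable (C : Type u) [AddCommGroup C] [Module k C]
variable (M : Type u) [AddCommGroup M] [Module k M]
variable (N : Type u) [AddCommGroup N] [Module k N]

/-- The coefficient tensor powers `M ⊗ C^{⊗n}` of the cobar complex,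
right-nested. -/
def MC : ℕ → ModuleCat.{u} k
  | 0 => ModuleCat.of k M
  | n + 1 => ModuleCat.of k (MC n ⊗[k] C)

/-- The part of the cobar differential coming from the right coaction on `M`
and the comultiplications: `m ⊗ c₁ ⊗ ⋯ ⊗ cₙ ↦ ρ_M(m) ⊗ c₁ ⊗ ⋯ ⊗ cₙ
+ ∑ᵢ (−1)ⁱ m ⊗ ⋯ ⊗ Δ(cᵢ) ⊗ ⋯ ⊗ cₙ`. -/
def DcB (Δ : C →ₗ[k] C ⊗[k] C) (ρM : M →ₗ[k] M ⊗[k] C) :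
    ∀ n, ↥(MC k C M n) →ₗ[k] ↥(MC k C M (n + 1))
  | 0 => ρM
  | n + 1 =>
      (show ↥(MC k C M (n + 1)) →ₗ[k] ↥(MC k C M (n + 2)) from
        LinearMap.rTensor C (DcB Δ ρM n)) +
      ((-1 : k) ^ (n + 1)) •
        (show ↥(MC k C M (n + 1)) →ₗ[k] ↥(MC k C M (n + 2)) from
          (TensorProduct.assoc k (↥(MC k C M n)) C C).symm.toLinearMap ∘ₗ
            LinearMap.lTensor (↥(MC k C M n)) Δ)

/-- The cobar differential on `M ⊗ C^{⊗n} ⊗ N`, computing `Cotor_C(M,N)`. -/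
def cobarD (Δ : C →ₗ[k] C ⊗[k] C) (ρM : M →ₗ[k] M ⊗[k] C) (ρN : N →ₗ[k] C ⊗[k] N)
    (n : ℕ) : (↥(MC k C M n) ⊗[k] N) →ₗ[k] (↥(MC k C M (n + 1)) ⊗[k] N) :=
  LinearMap.rTensor N (DcB k C M Δ ρM n) +
  ((-1 : k) ^ (n + 1)) •
    ((show (↥(MC k C M n) ⊗[k] C) ⊗[k] N →ₗ[k] ↥(MC k C M (n + 1)) ⊗[k] N from
        LinearMap.id) ∘ₗ
      (TensorProduct.assoc k (↥(MC k C M n)) C N).symm.toLinearMap ∘ₗ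
      LinearMap.lTensor (↥(MC k C M n)) ρN)

/-- `Cotor^n_C(M,N)`, the cohomology of the cobar complex. -/
def cobarH (Δ : C →ₗ[k] C ⊗[k] C) (ρM : M →ₗ[k] M ⊗[k] C) (ρN : N →ₗ[k] C ⊗[k] N) :
    ℕ → ModuleCat.{u} k
  | 0 => ModuleCat.of k ↥(LinearMap.ker (cobarD k C M N Δ ρM ρN 0))
  | n + 1 =>
      ModuleCat.of k
        (↥(LinearMap.ker (cobarD k C M N Δ ρM ρN (n + 1))) ⧸
          (LinearMap.range (cobarD k C M N Δ ρM ρN n)).comap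
            (LinearMap.ker (cobarD k C M N Δ ρM ρN (n + 1))).subtype)

variable (A : Type u) [Ring A] [Algebra k A]
variable (B : Type u) [AddCommGroup B] [Module k B]

/-- The Hochschild `n`-cochains of `A` with coefficients in the bimodule `B`
(`k`-multilinear, in curried form): `HC 0 = B`, `HC (n+1) = A →ₗ HC n`. -/
def HC : ℕ → ModuleCat.{u} k
  | 0 => ModuleCat.of k B
  | n + 1 => ModuleCat.of k (A →ₗ[k] HC n)

/-- The left action of `A` on cochains through the coefficients. -/
def actLn (lact : A →ₗ[k] B →ₗ[k] B) : ∀ n, A →ₗ[k] (↥(HC k A B n) →ₗ[k] ↥(HC k A B n))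
  | 0 => lact
  | n + 1 =>
      show A →ₗ[k] ((A →ₗ[k] ↥(HC k A B n)) →ₗ[k] (A →ₗ[k] ↥(HC k A B n))) from
        (LinearMap.llcomp k A (↥(HC k A B n)) (↥(HC k A B n))).comp (actLn lact n)

/-- The Hochschild differential
`(δf)(a₁,…,a_{n+1}) = a₁·f(a₂,…) + ∑ᵢ (−1)ⁱ f(…,aᵢa_{i+1},…)
+ (−1)^{n+1} f(a₁,…,aₙ)·a_{n+1}`, written recursively in curried form. -/
def hochD (lact ract : A →ₗ[k] B →ₗ[k] B) : ∀ n, ↥(HC k A B n) →ₗ[k] ↥(HC k A B (n + 1))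
  | 0 => (show A →ₗ[k] B →ₗ[k] B from lact - ract).flip
  | n + 1 =>
      (show ↥(HC k A B (n + 1)) →ₗ[k] ↥(HC k A B (n + 2)) from
        ((LinearMap.llcomp k A (↥(HC k A B n)) (↥(HC k A B n))).comp
          (actLn k A B lact n)).flip)
      - (show ↥(HC k A B (n + 1)) →ₗ[k] ↥(HC k A B (n + 2)) from
          (LinearMap.llcomp k A A (↥(HC k A B n))).compl₂ (LinearMap.mul k A))
      - (show ↥(HC k A B (n + 1)) →ₗ[k] ↥(HC k A B (n + 2)) from
          LinearMap.llcomp k A (↥(HC k A B n)) (↥(HC k A B (n + 1)))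
            (hochD lact ract n))
      + (show ↥(HC k A B (n + 1)) →ₗ[k] ↥(HC k A B (n + 2)) from
          LinearMap.llcomp k A (↥(HC k A B n)) (↥(HC k A B (n + 1)))
            (actLn k A B lact n).flip)

/-- `HH^n(A,B)`, the cohomology of the Hochschild cochain complex. -/
def hochH (lact ract : A →ₗ[k] B →ₗ[k] B) : ℕ → ModuleCat.{u} k
  | 0 => ModuleCat.of k ↥(LinearMap.ker (hochD k A B lact ract 0))
  | n + 1 =>
      ModuleCat.of k
        (↥(LinearMap.ker (hochD k A B lact ract (n + 1))) ⧸
          (LinearMap.range (hochD k A B lact ract n)).comap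
            (LinearMap.ker (hochD k A B lact ract (n + 1))).subtype)

/-- Evaluation of a linear functional at `a ∈ A`. -/
def evalAt (a : A) : Module.Dual k A →ₗ[k] k := LinearMap.id.flip a

/-- Evaluation of cochains along a sequence. -/
def hev : ∀ n, (ℕ → A) → (↥(HC k A B n) →ₗ[k] B)
  | 0, _ => LinearMap.id
  | n + 1, a =>
      (show (A →ₗ[k] ↥(HC k A B n)) →ₗ[k] B from
        (hev n (fun j => a (j + 1))).comp (LinearMap.applyₗ (a 0)))

/-- Evaluation of `M ⊗ C^{⊗n}` along a sequence. -/
def mev : ∀ n, (ℕ → A) → (↥(MC k (Module.Dual k A) M n) →ₗ[k] M)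
  | 0, _ => LinearMap.id
  | n + 1, a =>
      (show (↥(MC k (Module.Dual k A) M n) ⊗[k] Module.Dual k A) →ₗ[k] M from
        (TensorProduct.rid k M).toLinearMap ∘ₗ
          TensorProduct.map (mev n a) (evalAt k A (a n)))

/-- Multiply the entries `i`, `i+1`. -/
def mergeSeq (i : ℕ) (a : ℕ → A) : ℕ → A := fun j =>
  if j < i then a j else if j = i then a i * a (i + 1) else a (j + 1)

theorem hev_zero (a : ℕ → A) (f : B) : hev k A B 0 a f = f := rfl

theorem hev_succ (n : ℕ) (a : ℕ → A) (f : A →ₗ[k] ↥(HC k A B n)) :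
    hev k A B (n + 1) a f = hev k A B n (fun j => a (j + 1)) (f (a 0)) := rfl

theorem mev_zero (a : ℕ → A) (t : M) : mev k M A 0 a t = t := rfl

theorem mev_succ (n : ℕ) (a : ℕ → A) (t : ↥(MC k (Module.Dual k A) M n))
    (c : Module.Dual k A) :
    mev k M A (n + 1) a (t ⊗ₜ[k] c : ↥(MC k (Module.Dual k A) M n) ⊗[k] Module.Dual k A)
      = c (a n) • mev k M A n a t := rfl

theorem mev_congr (n : ℕ) (a b : ℕ → A) (h : ∀ j < n, a j = b j) :
    mev k M A n a = mev k M A n b := by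
  induction n with
  | zero => rfl
  | succ n ih =>
    simp only [mev]
    rw [ih (fun j hj => h j (by omega)), h n (by omega)]

theorem hev_ext (n : ℕ) (f g : ↥(HC k A B n))
    (h : ∀ a, hev k A B n a f = hev k A B n a g) : f = g := by
  induction n with
  | zero => exact h (fun _ => 0)
  | succ n ih =>
    change A →ₗ[k] ↥(HC k A B n) at f
    change A →ₗ[k] ↥(HC k A B n) at g
    refine LinearMap.ext fun x => ih _ _ fun a => ?_
    exact h (fun j => Nat.casesOn j x a)

theorem hev_actLn (lact : A →ₗ[k] B →ₗ[k] B) (n : ℕ) (a : ℕ → A) (x : A)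
    (f : ↥(HC k A B n)) :
    hev k A B n a (actLn k A B lact n x f) = lact x (hev k A B n a f) := by
  induction n generalizing a with
  | zero => rfl
  | succ n ih => exact ih _ _

theorem hev_hochD (lact ract : A →ₗ[k] B →ₗ[k] B) (n : ℕ) (a : ℕ → A)
    (f : ↥(HC k A B n)) :
    hev k A B (n + 1) a (hochD k A B lact ract n f) =
      lact (a 0) (hev k A B n (fun j => a (j + 1)) f)
      + ∑ i ∈ Finset.range n, (-1 : k) ^ (i + 1) • hev k A B n (mergeSeq A i a) f
      + (-1 : k) ^ (n + 1) • ract (a n) (hev k A B n a f) := by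
  induction n generalizing a with
  | zero =>
    have : hev k A B 1 a (hochD k A B lact ract 0 f) = lact (a 0) f - ract (a 0) f := rfl
    rw [this]
    simp [sub_eq_add_neg]
    rfl
  | succ n ih =>
    change A →ₗ[k] ↥(HC k A B n) at f
    have e : hev k A B (n + 2) a (hochD k A B lact ract (n + 1) f) =
        hev k A B n (fun j => a (j + 2)) (actLn k A B lact n (a 0) (f (a 1)))
        - hev k A B n (fun j => a (j + 2)) (f (a 0 * a 1))
        - hev k A B (n + 1) (fun j => a (j + 1)) (hochD k A B lact ract n (f (a 0)))
        + hev k A B n (fun j => a (j + 2)) (actLn k A B lact n (a 1) (f (a 0))) := by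
      rw [← map_sub]
      refine Eq.trans ?_ (congrArg₂ (· + ·) (congrArg₂ (· - ·) rfl rfl) rfl)
      rw [map_sub]
      change hev k A B n (fun j => a (j + 2)) (_ - _ - _ + _) = _
      rw [map_add, map_sub, map_sub]
      rfl
    rw [e, ih, hev_actLn, hev_actLn, Finset.sum_range_succ']
    have h0 : hev k A B (n + 1) (mergeSeq A 0 a) f
        = hev k A B n (fun j => a (j + 2)) (f (a 0 * a 1)) := by
      rw [hev_succ]
      rfl
    have h1 : ∀ i, hev k A B (n + 1) (mergeSeq A (i + 1) a) f
        = hev k A B n (mergeSeq A i (fun j => a (j + 1))) (f (a 0)) := by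
      intro i
      rw [hev_succ]
      have : (fun j => mergeSeq A (i + 1) a (j + 1)) = mergeSeq A i (fun j => a (j + 1)) := by
        funext j
        simp [mergeSeq]
      rw [this]
      rfl
    have h2 : ∑ i ∈ Finset.range n, (-1 : k) ^ (i + 1 + 1) •
          hev k A B (n + 1) (mergeSeq A (i + 1) a) f
        = - ∑ i ∈ Finset.range n, (-1 : k) ^ (i + 1) •
          hev k A B n (mergeSeq A i (fun j => a (j + 1))) (f (a 0)) := by
      rw [← Finset.sum_neg_distrib]
      refine Finset.sum_congr rfl fun i _ => ?_
      rw [h1, pow_succ, mul_neg_one, neg_smul]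
    rw [h2, h0, hev_succ, hev_succ]
    simp only [pow_succ (-1 : k) (n + 1), mul_neg_one, neg_smul, zero_add, pow_one, one_smul]
    abel

theorem mev_comul (comul : Module.Dual k A →ₗ[k] Module.Dual k A ⊗[k] Module.Dual k A)
    (hcomul : ∀ (f : Module.Dual k A) (a b : A),
      TensorProduct.dualDistrib k A A (comul f) (a ⊗ₜ[k] b) = f (a * b))
    (n : ℕ) (a : ℕ → A) (t : ↥(MC k (Module.Dual k A) M n)) (c : Module.Dual k A) :
    mev k M A (n + 2) a ((TensorProduct.assoc k (↥(MC k (Module.Dual k A) M n))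
      (Module.Dual k A) (Module.Dual k A)).symm (t ⊗ₜ[k] comul c)) =
      c (a n * a (n + 1)) • mev k M A n a t := by
  rw [← hcomul]
  induction comul c using TensorProduct.induction_on with
  | zero => simp; exact map_zero _
  | add x y hx hy =>
    rw [TensorProduct.tmul_add, map_add, map_add (dualDistrib k A A), LinearMap.add_apply,
      add_smul, ← hx, ← hy]
    exact map_add _ _ _
  | tmul x y =>
    rw [TensorProduct.assoc_symm_tmul, TensorProduct.dualDistrib_apply, mul_comm, mul_smul]
    rfl

theorem mev_DcB [Module A M] [IsScalarTower k A M]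
    (comul : Module.Dual k A →ₗ[k] Module.Dual k A ⊗[k] Module.Dual k A)
    (hcomul : ∀ (f : Module.Dual k A) (a b : A),
      TensorProduct.dualDistrib k A A (comul f) (a ⊗ₜ[k] b) = f (a * b))
    (ρM : M →ₗ[k] M ⊗[k] Module.Dual k A)
    (hρM : ∀ (m : M) (a : A),
      TensorProduct.rid k M (LinearMap.lTensor M (evalAt k A a) (ρM m)) = a • m)
    (n : ℕ) (a : ℕ → A) (t : ↥(MC k (Module.Dual k A) M n)) :
    mev k M A (n + 1) a (DcB k (Module.Dual k A) M comul ρM n t) =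
      a 0 • mev k M A n (fun j => a (j + 1)) t
      + ∑ i ∈ Finset.range n, (-1 : k) ^ (i + 1) • mev k M A n (mergeSeq A i a) t := by
  induction n with
  | zero =>
    simp only [Finset.range_zero, Finset.sum_empty, add_zero]
    exact hρM t (a 0)
  | succ n ih =>
    change ↥(MC k (Module.Dual k A) M n) ⊗[k] Module.Dual k A at t
    induction t using TensorProduct.induction_on with
    | zero =>
      have h : ∀ b, mev k M A (n + 1) b
        (0 : ↥(MC k (Module.Dual k A) M n) ⊗[k] Module.Dual k A) = 0 := fun b => map_zero _
      simp only [h, smul_zero, Finset.sum_const_zero, add_zero]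
      exact (congrArg _ (map_zero _)).trans (map_zero _)
    | add x y hx hy =>
      have h : ∀ b, mev k M A (n + 1) b (x + y) = mev k M A (n + 1) b x + mev k M A (n + 1) b y :=
        fun b => map_add _ _ _
      simp only [h, smul_add, Finset.sum_add_distrib]
      refine ((congrArg _ (map_add _ _ _)).trans (map_add _ _ _)).trans ?_
      refine (congrArg₂ (· + ·) hx hy).trans ?_
      abel
    | tmul t c =>
      have e : mev k M A (n + 2) a (DcB k (Module.Dual k A) M comul ρM (n + 1) (t ⊗ₜ[k] c)) =
          c (a (n + 1)) • mev k M A (n + 1) a (DcB k (Module.Dual k A) M comul ρM n t)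
          + (-1 : k) ^ (n + 1) •
            mev k M A (n + 2) a ((TensorProduct.assoc k (↥(MC k (Module.Dual k A) M n))
              (Module.Dual k A) (Module.Dual k A)).symm (t ⊗ₜ[k] comul c)) := by
        refine Eq.trans (map_add (mev k M A (n + 2) a)
          (show ↥(MC k (Module.Dual k A) M (n + 2)) from
            DcB k (Module.Dual k A) M comul ρM n t ⊗ₜ[k] c)
          ((-1 : k) ^ (n + 1) • (show ↥(MC k (Module.Dual k A) M (n + 2)) from
            (TensorProduct.assoc k (↥(MC k (Module.Dual k A) M n))
              (Module.Dual k A) (Module.Dual k A)).symm (t ⊗ₜ[k] comul c)))) ?_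
        exact congrArg₂ (· + ·) rfl (map_smul _ _ _)
      refine e.trans ?_
      rw [ih, mev_comul k M A comul hcomul, Finset.sum_range_succ]
      have h1 : ∀ b, mev k M A (n + 1) b (t ⊗ₜ[k] c) = c (b n) • mev k M A n b t :=
        fun b => mev_succ k M A n b t c
      have h2 : mev k M A n (mergeSeq A n a) t = mev k M A n a t := by
        rw [mev_congr k M A n (mergeSeq A n a) a]
        intro j hj
        simp [mergeSeq, hj]
      have h3 : ∀ i ∈ Finset.range n, (-1 : k) ^ (i + 1) •
            mev k M A (n + 1) (mergeSeq A i a) (t ⊗ₜ[k] c)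
          = c (a (n + 1)) • ((-1 : k) ^ (i + 1) • mev k M A n (mergeSeq A i a) t) := by
        intro i hi
        have hi := Finset.mem_range.1 hi
        rw [h1, smul_comm]
        have : mergeSeq A i a n = a (n + 1) := by
          simp [mergeSeq, show ¬ n < i by omega, show n ≠ i by omega]
        rw [this]
      rw [Finset.sum_congr rfl h3, h1, h1, h2, ← Finset.smul_sum, smul_add, add_assoc]
      have h4 : mergeSeq A n a n = a n * a (n + 1) := by simp [mergeSeq]
      rw [h4, smul_algebra_smul_comm (c (a (n + 1))) (a 0)]

theorem HC_shift (B' : Type u) [AddCommGroup B'] [Module k B'] (e : B ≃ₗ[k] (A →ₗ[k] B'))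
    (n : ℕ) : ∃ E : ↥(HC k A B n) ≃ₗ[k] ↥(HC k A B' (n + 1)),
      ∀ a f, hev k A B' (n + 1) a (E f) = e (hev k A B n a f) (a n) := by
  induction n with
  | zero => exact ⟨e, fun a f => rfl⟩
  | succ n ih =>
    obtain ⟨E, hE⟩ := ih
    refine ⟨(show (A →ₗ[k] ↥(HC k A B n)) ≃ₗ[k] (A →ₗ[k] ↥(HC k A B' (n + 1))) from
      LinearEquiv.congrRight E), fun a f => ?_⟩
    exact hE (fun j => a (j + 1)) _

theorem phi_exists [FiniteDimensional k A] (n : ℕ) :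
    ∃ e : (↥(MC k (Module.Dual k A) M n) ⊗[k] N) ≃ₗ[k] ↥(HC k A (M ⊗[k] N) n),
      ∀ a t x, hev k A (M ⊗[k] N) n a (e (t ⊗ₜ[k] x)) = mev k M A n a t ⊗ₜ[k] x := by
  induction n generalizing N with
  | zero => exact ⟨LinearEquiv.refl k _, fun a t x => rfl⟩
  | succ n ih =>
    obtain ⟨e, he⟩ := ih (Module.Dual k A ⊗[k] N)
    obtain ⟨E, hE⟩ := HC_shift k A (M ⊗[k] (Module.Dual k A ⊗[k] N)) (M ⊗[k] N)
      ((TensorProduct.leftComm k M (Module.Dual k A) N).trans (dualTensorHomEquiv k A (M ⊗[k] N))) n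
    have key : ∀ a (t : ↥(MC k (Module.Dual k A) M n) ⊗[k] Module.Dual k A) (x : N),
        hev k A (M ⊗[k] N) (n + 1) a (E (e (TensorProduct.assoc k _ _ _ (t ⊗ₜ[k] x)))) =
          (show M from mev k M A (n + 1) a t) ⊗ₜ[k] x := by
      intro a t x
      induction t using TensorProduct.induction_on with
      | zero =>
        rw [TensorProduct.zero_tmul, map_zero, map_zero, map_zero, map_zero]
        exact ((congrArg (· ⊗ₜ[k] x) (map_zero (mev k M A (n + 1) a))).trans
          (TensorProduct.zero_tmul _ _)).symm
      | add s t hs ht =>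
        rw [TensorProduct.add_tmul, map_add, map_add, map_add, map_add]
        refine (congrArg₂ (· + ·) hs ht).trans ?_
        exact ((congrArg (· ⊗ₜ[k] x) (map_add (mev k M A (n + 1) a) s t)).trans
          (TensorProduct.add_tmul _ _ _)).symm
      | tmul t c =>
        refine (hE a (e (t ⊗ₜ[k] (c ⊗ₜ[k] x)))).trans ?_
        rw [he]
        refine Eq.trans ?_ (TensorProduct.smul_tmul' (c (a n)) (mev k M A n a t) x)
        simp [dualTensorHomEquiv]
    exact ⟨(show ((↥(MC k (Module.Dual k A) M n) ⊗[k] Module.Dual k A) ⊗[k] N) ≃ₗ[k] _ from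
      (TensorProduct.assoc k _ _ _).trans (e.trans E)), fun a t x => key a t x⟩

theorem phi_comm [Module A M] [IsScalarTower k A M]
    [Module Aᵐᵒᵖ N] [IsScalarTower k Aᵐᵒᵖ N]
    (comul : Module.Dual k A →ₗ[k] Module.Dual k A ⊗[k] Module.Dual k A)
    (hcomul : ∀ (f : Module.Dual k A) (a b : A),
      TensorProduct.dualDistrib k A A (comul f) (a ⊗ₜ[k] b) = f (a * b))
    (ρM : M →ₗ[k] M ⊗[k] Module.Dual k A)
    (hρM : ∀ (m : M) (a : A),
      TensorProduct.rid k M (LinearMap.lTensor M (evalAt k A a) (ρM m)) = a • m)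
    (ρN : N →ₗ[k] Module.Dual k A ⊗[k] N)
    (hρN : ∀ (x : N) (a : A),
      TensorProduct.lid k N (LinearMap.rTensor N (evalAt k A a) (ρN x)) =
        MulOpposite.op a • x)
    (lact ract : A →ₗ[k] (M ⊗[k] N) →ₗ[k] (M ⊗[k] N))
    (hlact : ∀ (a : A) (m : M) (x : N), lact a (m ⊗ₜ[k] x) = (a • m) ⊗ₜ[k] x)
    (hract : ∀ (a : A) (m : M) (x : N),
      ract a (m ⊗ₜ[k] x) = m ⊗ₜ[k] (MulOpposite.op a • x))
    (n : ℕ)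
    (e : (↥(MC k (Module.Dual k A) M n) ⊗[k] N) →ₗ[k] ↥(HC k A (M ⊗[k] N) n))
    (he : ∀ a t x, hev k A (M ⊗[k] N) n a (e (t ⊗ₜ[k] x)) = mev k M A n a t ⊗ₜ[k] x)
    (e' : (↥(MC k (Module.Dual k A) M (n + 1)) ⊗[k] N) →ₗ[k] ↥(HC k A (M ⊗[k] N) (n + 1)))
    (he' : ∀ a t x, hev k A (M ⊗[k] N) (n + 1) a (e' (t ⊗ₜ[k] x))
      = mev k M A (n + 1) a t ⊗ₜ[k] x) :
    e' ∘ₗ cobarD k (Module.Dual k A) M N comul ρM ρN n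
      = hochD k A (M ⊗[k] N) lact ract n ∘ₗ e := by
  refine TensorProduct.ext' fun t x => hev_ext _ _ _ _ _ _ fun a => ?_
  rw [LinearMap.comp_apply, LinearMap.comp_apply, hev_hochD]
  have h1 : cobarD k (Module.Dual k A) M N comul ρM ρN n (t ⊗ₜ[k] x) =
      DcB k (Module.Dual k A) M comul ρM n t ⊗ₜ[k] x + (-1 : k) ^ (n + 1) •
      (show ↥(MC k (Module.Dual k A) M (n + 1)) ⊗[k] N from
        (TensorProduct.assoc k (↥(MC k (Module.Dual k A) M n)) (Module.Dual k A) N).symm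
          (t ⊗ₜ[k] ρN x)) := rfl
  have h2 : ∀ y : Module.Dual k A ⊗[k] N, hev k A (M ⊗[k] N) (n + 1) a (e'
      (show ↥(MC k (Module.Dual k A) M (n + 1)) ⊗[k] N from
        (TensorProduct.assoc k (↥(MC k (Module.Dual k A) M n)) (Module.Dual k A) N).symm
          (t ⊗ₜ[k] y))) =
      mev k M A n a t ⊗ₜ[k] TensorProduct.lid k N (LinearMap.rTensor N (evalAt k A (a n)) y) := by
    intro y
    induction y using TensorProduct.induction_on with
    | zero =>
      rw [TensorProduct.tmul_zero, map_zero, map_zero, map_zero, TensorProduct.tmul_zero]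
      exact (congrArg _ (map_zero e')).trans (map_zero _)
    | add y z hy hz =>
      rw [map_add, map_add, TensorProduct.tmul_add, TensorProduct.tmul_add, map_add, ← hy, ← hz]
      exact (congrArg _ (map_add e' _ _)).trans (map_add _ _ _)
    | tmul c y =>
      refine (he' a (show ↥(MC k (Module.Dual k A) M (n + 1)) from
        (t ⊗ₜ[k] c : ↥(MC k (Module.Dual k A) M n) ⊗[k] Module.Dual k A)) y).trans ?_
      refine (congrArg (· ⊗ₜ[k] y) (mev_succ k M A n a t c)).trans ?_
      exact TensorProduct.smul_tmul _ _ _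
  rw [h1, map_add, map_add, map_smul, map_smul, h2, hρN, he', mev_DcB k M A comul hcomul ρM hρM]
  simp only [he, hlact, hract, TensorProduct.add_tmul, TensorProduct.sum_tmul,
    TensorProduct.smul_tmul']

theorem ker_equiv {V W V' W' : Type u} [AddCommGroup V] [Module k V] [AddCommGroup W] [Module k W]
    [AddCommGroup V'] [Module k V'] [AddCommGroup W'] [Module k W']
    (d : V →ₗ[k] W) (d' : V' →ₗ[k] W') (e : V ≃ₗ[k] V') (f : W ≃ₗ[k] W')
    (h : f.toLinearMap ∘ₗ d = d' ∘ₗ e.toLinearMap) :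
    ∃ g : ↥(LinearMap.ker d) ≃ₗ[k] ↥(LinearMap.ker d'), ∀ x, (g x : V') = e x := by
  have hm : (LinearMap.ker d).map e.toLinearMap = LinearMap.ker d' := by
    ext y
    obtain ⟨x, rfl⟩ := e.surjective y
    have hx : f (d x) = d' (e x) := LinearMap.congr_fun h x
    simp [← hx]
  exact ⟨e.ofSubmodules _ _ hm, fun x => rfl⟩

theorem coh_equiv {U V W U' V' W' : Type u} [AddCommGroup U] [Module k U]
    [AddCommGroup U'] [Module k U']
    [AddCommGroup V] [Module k V] [AddCommGroup W] [Module k W]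
    [AddCommGroup V'] [Module k V'] [AddCommGroup W'] [Module k W']
    (c : U →ₗ[k] V) (c' : U' →ₗ[k] V')
    (d : V →ₗ[k] W) (d' : V' →ₗ[k] W') (b : U ≃ₗ[k] U') (e : V ≃ₗ[k] V') (f : W ≃ₗ[k] W')
    (h' : e.toLinearMap ∘ₗ c = c' ∘ₗ b.toLinearMap)
    (h : f.toLinearMap ∘ₗ d = d' ∘ₗ e.toLinearMap) :
    Nonempty ((↥(LinearMap.ker d) ⧸ (LinearMap.range c).comap (LinearMap.ker d).subtype) ≃ₗ[k]
      (↥(LinearMap.ker d') ⧸ (LinearMap.range c').comap (LinearMap.ker d').subtype)) := by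
  obtain ⟨g, hg⟩ := ker_equiv k d d' e f h
  refine ⟨Submodule.Quotient.equiv _ _ g ?_⟩
  have hc : ∀ u, e (c u) = c' (b u) := fun u => LinearMap.congr_fun h' u
  ext y
  obtain ⟨x, rfl⟩ := g.surjective y
  simp only [Submodule.mem_map, Submodule.mem_comap, Submodule.subtype_apply, hg,
    LinearMap.mem_range]
  constructor
  · rintro ⟨z, ⟨u, hu⟩, hz⟩
    have hz' : z = x := g.injective hz
    subst hz'
    exact ⟨b u, by rw [← hc, hu]⟩
  · rintro ⟨u, hu⟩
    refine ⟨x, ⟨b.symm u, e.injective ?_⟩, rfl⟩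
    rw [hc, b.apply_symm_apply, hu]

/-- Let `A` be a finite-dimensional `k`-algebra and `C = A*` its dual coalgebra
(`Δ` dual to the multiplication, `ε = ev₁`).  Let `M` be a left `A`-module and
`N` a right `A`-module, i.e. a right `C`-comodule and a left `C`-comodule with
coactions `ρ_M`, `ρ_N` dual to the actions.  Then
`Cotor^n_C(M,N) ≅ HH^n(A, M ⊗ N)` for all `n ≥ 0`, where `M ⊗ N` carries the
`A`-bimodule structure `a·(m⊗x) = am ⊗ x`, `(m⊗x)·a = m ⊗ xa`. -/
theorem cotor_dual_coalgebra_iso_hochschild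
    (A : Type u) [Ring A] [Algebra k A] [FiniteDimensional k A]
    [Module A M] [IsScalarTower k A M]
    [Module Aᵐᵒᵖ N] [IsScalarTower k Aᵐᵒᵖ N]
    -- the dual coalgebra structure on C = A*
    (comul : Module.Dual k A →ₗ[k] Module.Dual k A ⊗[k] Module.Dual k A)
    (hcomul : ∀ (f : Module.Dual k A) (a b : A),
      TensorProduct.dualDistrib k A A (comul f) (a ⊗ₜ[k] b) = f (a * b))
    (counit : Module.Dual k A →ₗ[k] k)
    (hcounit : ∀ f : Module.Dual k A, counit f = f 1)
    -- the right C-comodule structure on M dual to the left A-action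
    (ρM : M →ₗ[k] M ⊗[k] Module.Dual k A)
    (hρM : ∀ (m : M) (a : A),
      TensorProduct.rid k M (LinearMap.lTensor M (evalAt k A a) (ρM m)) = a • m)
    -- the left C-comodule structure on N dual to the right A-action
    (ρN : N →ₗ[k] Module.Dual k A ⊗[k] N)
    (hρN : ∀ (x : N) (a : A),
      TensorProduct.lid k N (LinearMap.rTensor N (evalAt k A a) (ρN x)) =
        MulOpposite.op a • x)
    -- the A-bimodule structure on B = M ⊗ N
    (lact ract : A →ₗ[k] (M ⊗[k] N) →ₗ[k] (M ⊗[k] N))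
    (hlact : ∀ (a : A) (m : M) (x : N), lact a (m ⊗ₜ[k] x) = (a • m) ⊗ₜ[k] x)
    (hract : ∀ (a : A) (m : M) (x : N),
      ract a (m ⊗ₜ[k] x) = m ⊗ₜ[k] (MulOpposite.op a • x)) :
    ∀ n : ℕ,
      Nonempty
        (↥(cobarH k (Module.Dual k A) M N comul ρM ρN n) ≃ₗ[k]
          ↥(hochH k A (M ⊗[k] N) lact ract n)) := by
  intro n
  have hcomm := phi_comm k M N A comul hcomul ρM hρM ρN hρN lact ract hlact hract
  cases n with
  | zero =>
    obtain ⟨e, he⟩ := phi_exists k M N A 0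
    obtain ⟨e', he'⟩ := phi_exists k M N A 1
    obtain ⟨g, _⟩ := ker_equiv k _ _ e e' (hcomm 0 e he e' he')
    exact ⟨g⟩
  | succ n =>
    obtain ⟨e, he⟩ := phi_exists k M N A n
    obtain ⟨e', he'⟩ := phi_exists k M N A (n + 1)
    obtain ⟨e'', he''⟩ := phi_exists k M N A (n + 2)
    exact coh_equiv k _ _ _ _ e e' e'' (hcomm n e he e' he') (hcomm (n + 1) e' he' e'' he'')

end
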